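/- Let S be any edit sequence of schema-preserving edit operations transforming an RLT T₁ into an RLT T₂, with induced mapping M (pairing nodes of T₁ that persist through S with their images in T₂), and let N₁ and N₂ be the sets of nodes of T₁ and T₂ not occurring in M. Then N₁ is closed under taking descendants in T₁ and N₂ is closed under taking descendants in T₂; that is, only whole subtrees are deleted from T₁ and only whole subtrees are inserted into T₂. -/

import Mathlib

/- Formalization framework for "Tree edit distance for hierarchical data
compatible with HMIL paradigm".

Rooted labeled trees (RLTs): `Value` leaves carry a label `l : L` with data type
`τ l : DT`; `Bag` nodes have an unordered finite collection of children
(represented by a `List` together with free, zero-cost permutation edit steps,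
which realizes the multiset semantics); `Object` nodes have children indexed by
pairwise distinct string edge-labels (an association list with `Nodup` keys,
again with free reordering since it represents a finite map).  The empty tree Λ
is represented by `none : OTree L`. -/

namespace TED

inductive PreRLT (L : Type) : Type where
  | value : L → PreRLT L
  | bag   : List (PreRLT L) → PreRLT L
  | obj   : List (String × PreRLT L) → PreRLT L

namespace PreRLT

variable {L DT : Type}

/-- Node types ν: Value, Bag, Object. -/
inductive NT : Type where
  | value | bag | obj
deriving DecidableEq

/-- The kind of a node: its node type together with its label (Bag and Object
nodes implicitly carry the null label). -/
inductive NodeKind (L : Type) : Type where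
  | value : L → NodeKind L
  | bag : NodeKind L
  | obj : NodeKind L

def nt : PreRLT L → NT
  | .value _ => .value
  | .bag _ => .bag
  | .obj _ => .obj

def kind : PreRLT L → NodeKind L
  | .value l => .value l
  | .bag _ => .bag
  | .obj _ => .obj

def children : PreRLT L → List (PreRLT L)
  | .value _ => []
  | .bag cs => cs
  | .obj cs => cs.map Prod.snd

/-- A leaf is a node with no children (a Value node, an empty Bag or an empty
Object). -/
def IsLeaf (t : PreRLT L) : Prop := t.children = []

/-- Well-formedness: the edge labels of every Object node are pairwise
distinct. -/
inductive WF : PreRLT L → Prop where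
  | value (l : L) : WF (.value l)
  | bag {cs : List (PreRLT L)} : (∀ c ∈ cs, WF c) → WF (.bag cs)
  | obj {cs : List (String × PreRLT L)} :
      (cs.map Prod.fst).Nodup → (∀ p ∈ cs, WF p.2) → WF (.obj cs)

end PreRLT

open PreRLT

/-- Possibly empty rooted labeled tree; `none` is the empty tree Λ. -/
abbrev OTree (L : Type) := Option (PreRLT L)

def WFO {L : Type} : OTree L → Prop
  | none => True
  | some t => t.WF

/-- The cost function γ.  `rel l l'` is the cost of relabeling a Value node
(used only when `τ l = τ l'`), and `del k` is the cost γ(v, λ) of deleting a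
node of kind `k`; insertion cost γ(λ, v) equals the deletion cost γ(v, λ).
γ is a metric on labels of equal data type. -/
structure Cost (L DT : Type) (τ : L → DT) where
  rel : L → L → ℝ
  del : PreRLT.NodeKind L → ℝ
  del_nonneg : ∀ k, 0 ≤ del k
  rel_self : ∀ l, rel l l = 0
  rel_indisc : ∀ l l', τ l = τ l' → rel l l' = 0 → l = l'
  rel_symm : ∀ l l', rel l l' = rel l' l
  rel_triangle : ∀ l₁ l₂ l₃, τ l₁ = τ l₂ → τ l₂ = τ l₃ →
      rel l₁ l₃ ≤ rel l₁ l₂ + rel l₂ l₃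

variable {L DT : Type} {τ : L → DT}

/-- Schema-preserving edit steps on nonempty trees: relabel a Value node to a
label of the same data type, delete a leaf, insert a leaf (at an Object node
only with a fresh edge label).  The `bagPerm`/`objPerm` steps are invisible,
zero-cost reorderings of the list representation of the unordered children
collections. -/
inductive Estep (τ : L → DT) : PreRLT L → PreRLT L → Type where
  | relabel (l l' : L) (h : τ l = τ l') : Estep τ (.value l) (.value l')
  | bagPerm (cs : List (PreRLT L)) (σ : Equiv.Perm (Fin cs.length)) :
      Estep τ (.bag cs) (.bag (List.ofFn fun i => cs.get (σ i)))
  | objPerm (cs : List (String × PreRLT L)) (σ : Equiv.Perm (Fin cs.length)) :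
      Estep τ (.obj cs) (.obj (List.ofFn fun i => cs.get (σ i)))
  | bagCongr (pre post : List (PreRLT L)) {t t' : PreRLT L} (e : Estep τ t t') :
      Estep τ (.bag (pre ++ t :: post)) (.bag (pre ++ t' :: post))
  | objCongr (pre post : List (String × PreRLT L)) (k : String) {t t' : PreRLT L}
      (e : Estep τ t t') :
      Estep τ (.obj (pre ++ (k, t) :: post)) (.obj (pre ++ (k, t') :: post))
  | bagDel (cs : List (PreRLT L)) (t : PreRLT L) (h : t.IsLeaf) :
      Estep τ (.bag (t :: cs)) (.bag cs)
  | bagIns (cs : List (PreRLT L)) (t : PreRLT L) (h : t.IsLeaf) :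
      Estep τ (.bag cs) (.bag (t :: cs))
  | objDel (cs : List (String × PreRLT L)) (k : String) (t : PreRLT L) (h : t.IsLeaf) :
      Estep τ (.obj ((k, t) :: cs)) (.obj cs)
  | objIns (cs : List (String × PreRLT L)) (k : String) (t : PreRLT L) (h : t.IsLeaf)
      (hk : k ∉ cs.map Prod.fst) :
      Estep τ (.obj cs) (.obj ((k, t) :: cs))

/-- Cost of a single edit step. -/
def Estep.cost (C : Cost L DT τ) : {t t' : PreRLT L} → Estep τ t t' → ℝ
  | _, _, .relabel l l' _ => C.rel l l'
  | _, _, .bagPerm _ _ => 0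
  | _, _, .objPerm _ _ => 0
  | _, _, .bagCongr _ _ e => e.cost C
  | _, _, .objCongr _ _ _ e => e.cost C
  | _, _, .bagDel _ t _ => C.del t.kind
  | _, _, .bagIns _ t _ => C.del t.kind
  | _, _, .objDel _ _ t _ => C.del t.kind
  | _, _, .objIns _ _ t _ _ => C.del t.kind

/-- Edit steps on possibly empty trees: the root leaf may be deleted, and a
root leaf may be inserted into the empty tree. -/
inductive EstepO (τ : L → DT) : OTree L → OTree L → Type where
  | inner {t t' : PreRLT L} (e : Estep τ t t') : EstepO τ (some t) (some t')
  | delRoot (t : PreRLT L) (h : t.IsLeaf) : EstepO τ (some t) none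
  | insRoot (t : PreRLT L) (h : t.IsLeaf) : EstepO τ none (some t)

def EstepO.cost (C : Cost L DT τ) : {T T' : OTree L} → EstepO τ T T' → ℝ
  | _, _, .inner e => e.cost C
  | _, _, .delRoot t _ => C.del t.kind
  | _, _, .insRoot t _ => C.del t.kind

/-- An edit sequence S = s₁ ∘ ⋯ ∘ s_k transforming one tree into another. -/
inductive Eseq (τ : L → DT) : OTree L → OTree L → Type where
  | nil (T : OTree L) : Eseq τ T T
  | cons {T T' T'' : OTree L} (s : EstepO τ T T') (S : Eseq τ T' T'') : Eseq τ T T''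

/-- γ(S), the total cost of an edit sequence. -/
def Eseq.cost (C : Cost L DT τ) : {T T' : OTree L} → Eseq τ T T' → ℝ
  | _, _, .nil _ => 0
  | _, _, .cons s S => s.cost C + S.cost C

/-- The tree edit distance d(T, T'): the minimum of γ(S) over all edit
sequences S transforming T into T'. -/
noncomputable def editDist (C : Cost L DT τ) (T T' : OTree L) : ℝ :=
  sInf {c : ℝ | ∃ S : Eseq τ T T', S.cost C = c}

end TED
namespace TED

open PreRLT

variable {L DT : Type} {τ : L → DT}

/-- Addresses of nodes in a tree: a child of a Bag node is addressed by its
position, a child of an Object node by its edge label. -/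
inductive Pstep : Type where
  | idx : ℕ → Pstep
  | key : String → Pstep
deriving DecidableEq

abbrev Path := List Pstep

/-- The subtree rooted at the node addressed by a path, if it exists. -/
def subAt : Path → PreRLT L → Option (PreRLT L)
  | [], t => some t
  | .idx n :: p, .bag cs => cs[n]?.bind (subAt p)
  | .key k :: p, .obj cs => (List.lookup k cs).bind (subAt p)
  | _, _ => none

def subAtO (T : OTree L) (p : Path) : Option (PreRLT L) :=
  T.bind (fun t => subAt p t)

/-- `p` addresses a node of `T`. -/
def IsNode (T : OTree L) (p : Path) : Prop := (subAtO T p).isSome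

/-- Two nodes have the same node type and, for Value nodes, the same data
type. -/
def SameTypePair (τ : L → DT) (t₁ t₂ : PreRLT L) : Prop :=
  t₁.nt = t₂.nt ∧ ∀ l₁ l₂, t₁ = .value l₁ → t₂ = .value l₂ → τ l₁ = τ l₂

/-- `q` addresses a (proper) descendant of the node addressed by `p`. -/
def IsDesc (p q : Path) : Prop := p <+: q ∧ q ≠ p

/-- An edit distance mapping (M, T₁, T₂). -/
structure IsMapping (τ : L → DT) (T₁ T₂ : OTree L) (M : Set (Path × Path)) : Prop where
  /-- pairs consist of a node of T₁ and a node of T₂ -/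
  nodes : ∀ pq ∈ M, IsNode T₁ pq.1 ∧ IsNode T₂ pq.2
  /-- paired nodes have the same node type and, for Value nodes, data type -/
  types : ∀ pq ∈ M, ∃ t₁ t₂, subAtO T₁ pq.1 = some t₁ ∧ subAtO T₂ pq.2 = some t₂ ∧
      SameTypePair τ t₁ t₂
  /-- the mapping is one-to-one -/
  one_to_one : ∀ pq ∈ M, ∀ pq' ∈ M, ((pq : Path × Path).1 = (pq' : Path × Path).1 ↔
      (pq : Path × Path).2 = (pq' : Path × Path).2)
  /-- parents of non-root paired nodes are paired as well -/
  parents : ∀ pq ∈ M, (pq : Path × Path).1 ≠ [] → (pq : Path × Path).2 ≠ [] →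
      ((pq : Path × Path).1.dropLast, (pq : Path × Path).2.dropLast) ∈ M
  /-- if (v, w) ∉ M then no descendant of v is paired with a descendant of w -/
  desc : ∀ p q, (p, q) ∉ M → ∀ p' q', IsDesc p p' → IsDesc q q' → (p', q') ∉ M
  /-- paired children of Object nodes are connected by equally labeled edges -/
  edge : ∀ pq ∈ M, ∀ t : PreRLT L, (pq : Path × Path).1 ≠ [] →
      subAtO T₁ (pq : Path × Path).1.dropLast = some t → t.nt = .obj →
      (pq : Path × Path).1.getLast? = (pq : Path × Path).2.getLast?

/-- γ(v → w) for a pair of mapped nodes: the relabeling cost for Value nodes,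
and 0 for the (null-labeled) inner nodes. -/
noncomputable def pairCost (C : Cost L DT τ) (T₁ T₂ : OTree L) (p q : Path) : ℝ :=
  match subAtO T₁ p, subAtO T₂ q with
  | some (.value l₁), some (.value l₂) => C.rel l₁ l₂
  | _, _ => 0

/-- γ(v, λ), the deletion (= insertion) cost of the node of `T` at `p`. -/
noncomputable def delCost (C : Cost L DT τ) (T : OTree L) (p : Path) : ℝ :=
  match subAtO T p with
  | some t => C.del t.kind
  | none => 0

/-- γ(M) = Σ_{(v,w)∈M} γ(v,w) + Σ_{v∈N₁} γ(v,λ) + Σ_{w∈N₂} γ(λ,w), where N₁, N₂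
are the nodes of T₁, T₂ not occurring in M. -/
noncomputable def mapCost (C : Cost L DT τ) (T₁ T₂ : OTree L)
    (M : Set (Path × Path)) : ℝ :=
  (∑ᶠ pq ∈ M, pairCost C T₁ T₂ (pq : Path × Path).1 (pq : Path × Path).2)
    + (∑ᶠ p ∈ {p : Path | IsNode T₁ p ∧ ∀ q, (p, q) ∉ M}, delCost C T₁ p)
    + (∑ᶠ q ∈ {q : Path | IsNode T₂ q ∧ ∀ p, (p, q) ∉ M}, delCost C T₂ q)

/-- How a single edit step moves node addresses: `e.pmap p = some q` iff the
node at `p` persists through `e` (possibly relabeled) as the node at `q`. -/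
def Estep.pmap : {t t' : PreRLT L} → Estep τ t t' → Path → Option Path
  | _, _, .relabel _ _ _, [] => some []
  | _, _, .relabel _ _ _, _ :: _ => none
  | _, _, .bagPerm _ _, [] => some []
  | _, _, .bagPerm cs σ, .idx i :: p =>
      if h : i < cs.length then some (.idx (σ.symm ⟨i, h⟩).val :: p) else none
  | _, _, .bagPerm _ _, .key _ :: _ => none
  | _, _, .objPerm _ _, [] => some []
  | _, _, .objPerm _ _, .key k :: p => some (.key k :: p)
  | _, _, .objPerm _ _, .idx _ :: _ => none
  | _, _, .bagCongr _ _ _, [] => some []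
  | _, _, .bagCongr pre _ e, .idx i :: p =>
      if i = pre.length then (e.pmap p).map (fun q => .idx i :: q)
      else some (.idx i :: p)
  | _, _, .bagCongr _ _ _, .key _ :: _ => none
  | _, _, .objCongr _ _ _ _, [] => some []
  | _, _, .objCongr _ _ k e, .key k' :: p =>
      if k' = k then (e.pmap p).map (fun q => .key k :: q)
      else some (.key k' :: p)
  | _, _, .objCongr _ _ _ _, .idx _ :: _ => none
  | _, _, .bagDel _ _ _, [] => some []
  | _, _, .bagDel _ _ _, .idx 0 :: _ => none
  | _, _, .bagDel _ _ _, .idx (i + 1) :: p => some (.idx i :: p)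
  | _, _, .bagDel _ _ _, .key _ :: _ => none
  | _, _, .bagIns _ _ _, [] => some []
  | _, _, .bagIns _ _ _, .idx i :: p => some (.idx (i + 1) :: p)
  | _, _, .bagIns _ _ _, .key _ :: _ => none
  | _, _, .objDel _ k _ _, [] => some []
  | _, _, .objDel _ k _ _, .key k' :: p =>
      if k' = k then none else some (.key k' :: p)
  | _, _, .objDel _ _ _ _, .idx _ :: _ => none
  | _, _, .objIns _ k _ _ _, [] => some []
  | _, _, .objIns _ k _ _ _, .key k' :: p =>
      if k' = k then none else some (.key k' :: p)
  | _, _, .objIns _ _ _ _ _, .idx _ :: _ => none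

def EstepO.pmap : {T T' : OTree L} → EstepO τ T T' → Path → Option Path
  | _, _, .inner e => e.pmap
  | _, _, .delRoot _ _ => fun _ => none
  | _, _, .insRoot _ _ => fun _ => none

/-- How an edit sequence moves node addresses, by composition. -/
def Eseq.pmap : {T T' : OTree L} → Eseq τ T T' → Path → Option Path
  | _, _, .nil _ => fun p => some p
  | _, _, .cons s S => fun p => (s.pmap p).bind S.pmap

/-- The mapping (M, T₁, T₂) induced by an edit sequence S : T₁ → T₂, pairing
each node of T₁ that persists (possibly relabeled) through S with its image in
T₂. -/
def Eseq.induced {T₁ T₂ : OTree L} (S : Eseq τ T₁ T₂) : Set (Path × Path) :=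
  {pq | IsNode T₁ pq.1 ∧ S.pmap pq.1 = some pq.2}

/-- The sum Σ_v γ(v, λ) of the deletion (equivalently, insertion) costs over
all nodes of a tree. -/
noncomputable def delSum (C : Cost L DT τ) : PreRLT L → ℝ
  | .value l => C.del (.value l)
  | .bag cs => C.del .bag + (cs.attach.map (fun c => delSum C c.1)).sum
  | .obj cs => C.del .obj + (cs.attach.map (fun c => delSum C c.1.2)).sum
  termination_by t => sizeOf t
  decreasing_by
  · have := List.sizeOf_lt_of_mem c.2
    simp only [PreRLT.bag.sizeOf_spec]
    omega
  · have h1 := List.sizeOf_lt_of_mem c.2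
    have h2 : sizeOf c.1.2 < sizeOf c.1 := by
      obtain ⟨a, b⟩ := c.1
      simp [Prod.mk.sizeOf_spec]
    simp only [PreRLT.obj.sizeOf_spec]
    omega

/-- Equality of trees under the multiset semantics of Bag children and the
finite-map semantics of Object children. -/
inductive TEquiv : PreRLT L → PreRLT L → Prop where
  | value (l : L) : TEquiv (.value l) (.value l)
  | bag {cs cs' : List (PreRLT L)} (l : List (PreRLT L × PreRLT L))
      (h₁ : l.map Prod.fst = cs) (h₂ : (l.map Prod.snd).Perm cs')
      (h₃ : ∀ pq ∈ l, TEquiv pq.1 pq.2) :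
      TEquiv (.bag cs) (.bag cs')
  | obj {cs cs' : List (String × PreRLT L)}
      (l : List ((String × PreRLT L) × (String × PreRLT L)))
      (h₁ : l.map Prod.fst = cs) (h₂ : (l.map Prod.snd).Perm cs')
      (hk : ∀ pq ∈ l, pq.1.1 = pq.2.1)
      (h₃ : ∀ pq ∈ l, TEquiv pq.1.2 pq.2.2) :
      TEquiv (.obj cs) (.obj cs')

/-- Equality of possibly empty trees under the multiset semantics. -/
def OEquiv : OTree L → OTree L → Prop
  | none, none => True
  | some t, some t' => TEquiv t t'
  | _, _ => False

end TED

/-! Truncating an address to its first `n` steps passes to an ancestor. An edit step deletes, moves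
or keeps each child subtree as a whole, or recurses into it, so whenever it sends the address `p` to
`q` it also sends each truncation of `p` to the truncation of `q` of the same length. This property
survives composition, hence the induced mapping relates all corresponding ancestors of any two nodes
that it relates: a node with a mapped descendant is itself mapped, on either side. -/

namespace TED

section TakeEquivariant

variable {α β γ : Type*}

/-- A partial map on lists that commutes with truncation wherever it is defined. For address maps
this expresses compatibility with passing to ancestors, at every depth simultaneously. -/
def TakeEquivariant (f : List α → Option (List β)) : Prop :=
  ∀ ⦃p : List α⦄ ⦃q : List β⦄, f p = some q → ∀ n, f (p.take n) = some (q.take n)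

theorem takeEquivariant_some : TakeEquivariant (some : List α → Option (List α)) := by
  rintro p _ ⟨⟩ n
  rfl

theorem takeEquivariant_none : TakeEquivariant (fun _ : List α => (none : Option (List β))) :=
  fun _ _ h => nomatch h

namespace TakeEquivariant

theorem bind {f : List α → Option (List β)} {g : List β → Option (List γ)}
    (hf : TakeEquivariant f) (hg : TakeEquivariant g) :
    TakeEquivariant fun p => (f p).bind g := by
  intro p r h n
  obtain ⟨q, hpq, hqr⟩ := Option.bind_eq_some_iff.1 h
  exact Option.bind_eq_some_iff.2 ⟨q.take n, hf hpq n, hg hqr n⟩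

-- A branch on which `f` is undefined is covered by `g = fun _ => none` with an arbitrary `b`.
theorem of_cons {f : List α → Option (List β)} (hnil : f [] = some [])
    (hcons : ∀ a, ∃ b g, TakeEquivariant g ∧ ∀ p, f (a :: p) = (g p).map (List.cons b)) :
    TakeEquivariant f := by
  rintro p q h (_ | n)
  · simpa only [List.take_zero] using hnil
  rcases p with _ | ⟨a, p⟩
  · obtain rfl : [] = q := Option.some.inj (hnil.symm.trans h)
    simpa only [List.take_nil] using hnil
  · obtain ⟨b, g, hg, hfg⟩ := hcons a
    obtain ⟨r, hr, rfl⟩ := Option.map_eq_some_iff.1 ((hfg p).symm.trans h)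
    rw [List.take_succ_cons, List.take_succ_cons, hfg, hg hr n, Option.map_some]

end TakeEquivariant

end TakeEquivariant

section EditSteps

variable {L DT : Type} {τ : L → DT}

theorem TakeEquivariant.of_idx {f : Path → Option Path} (hnil : f [] = some [])
    (hkey : ∀ k p, f (.key k :: p) = none)
    (hidx : ∀ i, ∃ b g, TakeEquivariant g ∧ ∀ p, f (.idx i :: p) = (g p).map (List.cons b)) :
    TakeEquivariant f :=
  .of_cons hnil fun
    | .idx i => hidx i
    | .key k => ⟨.key k, _, takeEquivariant_none, hkey k⟩

theorem TakeEquivariant.of_key {f : Path → Option Path} (hnil : f [] = some [])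
    (hidx : ∀ i p, f (.idx i :: p) = none)
    (hkey : ∀ k, ∃ b g, TakeEquivariant g ∧ ∀ p, f (.key k :: p) = (g p).map (List.cons b)) :
    TakeEquivariant f :=
  .of_cons hnil fun
    | .idx i => ⟨.idx i, _, takeEquivariant_none, hidx i⟩
    | .key k => hkey k

theorem Estep.pmap_takeEquivariant {t t' : PreRLT L} (e : Estep τ t t') :
    TakeEquivariant e.pmap := by
  induction e with
  | relabel => exact .of_cons rfl fun a => ⟨a, _, takeEquivariant_none, fun _ => rfl⟩
  | bagPerm cs σ =>
    refine .of_idx rfl (fun _ _ => rfl) fun i => ?_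
    by_cases hi : i < cs.length
    · exact ⟨.idx (σ.symm ⟨i, hi⟩), _, takeEquivariant_some, fun _ => dif_pos hi⟩
    · exact ⟨.idx i, _, takeEquivariant_none, fun _ => dif_neg hi⟩
  | objPerm =>
    exact .of_key rfl (fun _ _ => rfl) fun k => ⟨.key k, _, takeEquivariant_some, fun _ => rfl⟩
  | bagCongr pre _ _ ih =>
    refine .of_idx rfl (fun _ _ => rfl) fun i => ?_
    by_cases hi : i = pre.length
    · exact ⟨.idx i, _, ih, fun _ => if_pos hi⟩
    · exact ⟨.idx i, _, takeEquivariant_some, fun _ => if_neg hi⟩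
  | objCongr _ _ k _ ih =>
    refine .of_key rfl (fun _ _ => rfl) fun k' => ?_
    by_cases hk : k' = k
    · exact ⟨.key k, _, ih, fun _ => if_pos hk⟩
    · exact ⟨.key k', _, takeEquivariant_some, fun _ => if_neg hk⟩
  | bagDel =>
    exact .of_idx rfl (fun _ _ => rfl) fun
      | 0 => ⟨.idx 0, _, takeEquivariant_none, fun _ => rfl⟩
      | i + 1 => ⟨.idx i, _, takeEquivariant_some, fun _ => rfl⟩
  | bagIns =>
    exact .of_idx rfl (fun _ _ => rfl) fun i =>
      ⟨.idx (i + 1), _, takeEquivariant_some, fun _ => rfl⟩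
  | objDel _ k | objIns _ k =>
    refine .of_key rfl (fun _ _ => rfl) fun k' => ?_
    by_cases hk : k' = k
    · exact ⟨.key k', _, takeEquivariant_none, fun _ => if_pos hk⟩
    · exact ⟨.key k', _, takeEquivariant_some, fun _ => if_neg hk⟩

theorem EstepO.pmap_takeEquivariant {T T' : OTree L} : (s : EstepO τ T T') →
    TakeEquivariant s.pmap
  | .inner e => e.pmap_takeEquivariant
  | .delRoot _ _ => takeEquivariant_none
  | .insRoot _ _ => takeEquivariant_none

theorem Eseq.pmap_takeEquivariant {T T' : OTree L} : (S : Eseq τ T T') →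
    TakeEquivariant S.pmap
  | .nil _ => takeEquivariant_some
  | .cons s S => s.pmap_takeEquivariant.bind S.pmap_takeEquivariant

end EditSteps

section Nodes

variable {L DT : Type} {τ : L → DT}

theorem subAt_append (p q : Path) (t : PreRLT L) :
    subAt (p ++ q) t = (subAt p t).bind (subAt q) := by
  induction p generalizing t with
  | nil => rfl
  | cons a p ih =>
    rcases a with i | k <;> rcases t with l | cs | cs <;>
      simp only [List.cons_append, subAt, ih, Option.bind_assoc, Option.bind_none]

theorem IsNode.of_prefix {T : OTree L} {p q : Path} (hq : IsNode T q) (hpq : p <+: q) :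
    IsNode T p := by
  obtain ⟨r, rfl⟩ := hpq
  have hT : subAtO T (p ++ r) = (subAtO T p).bind (subAt r) := by
    simp only [subAtO, subAt_append, Option.bind_assoc]
  rw [IsNode, hT] at hq
  exact Option.isSome_of_isSome_bind hq

theorem Eseq.take_mem_induced {T₁ T₂ : OTree L} {S : Eseq τ T₁ T₂} {p q : Path}
    (h : (p, q) ∈ S.induced) (n : ℕ) : (p.take n, q.take n) ∈ S.induced :=
  ⟨h.1.of_prefix (p.take_prefix n), S.pmap_takeEquivariant h.2 n⟩

theorem Eseq.exists_induced_right_of_prefix {T₁ T₂ : OTree L} {S : Eseq τ T₁ T₂} {p p' q' : Path}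
    (h : (p', q') ∈ S.induced) (hp : p <+: p') : ∃ q, (p, q) ∈ S.induced := by
  rw [List.prefix_iff_eq_take.1 hp]
  exact ⟨_, take_mem_induced h p.length⟩

theorem Eseq.exists_induced_left_of_prefix {T₁ T₂ : OTree L} {S : Eseq τ T₁ T₂} {p' q q' : Path}
    (h : (p', q') ∈ S.induced) (hq : q <+: q') : ∃ p, (p, q) ∈ S.induced := by
  rw [List.prefix_iff_eq_take.1 hq]
  exact ⟨_, take_mem_induced h q.length⟩

end Nodes

end TED

/-- for the mapping M induced by an edit sequence S : T₁ → T₂,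
the set N₁ of nodes of T₁ not occurring in M is closed under taking
descendants in T₁, and likewise N₂ in T₂; i.e. only whole subtrees are deleted
from T₁ and only whole subtrees are inserted into T₂. -/
theorem induced_unmapped_desc_closed {L DT : Type} (τ : L → DT)
    (T₁ T₂ : TED.OTree L) (hT₁ : TED.WFO T₁) (hT₂ : TED.WFO T₂)
    (S : TED.Eseq τ T₁ T₂) :
    (∀ p, TED.IsNode T₁ p → (∀ q, (p, q) ∉ S.induced) →
      ∀ p', TED.IsDesc p p' → TED.IsNode T₁ p' → ∀ q, (p', q) ∉ S.induced) ∧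
    (∀ q, TED.IsNode T₂ q → (∀ p, (p, q) ∉ S.induced) →
      ∀ q', TED.IsDesc q q' → TED.IsNode T₂ q' → ∀ p, (p, q') ∉ S.induced) := by
  constructor
  · intro p _ hp p' hpp' _ q' hp'q'
    obtain ⟨q, hpq⟩ := TED.Eseq.exists_induced_right_of_prefix hp'q' hpp'.1
    exact hp q hpq
  · intro q _ hq q' hqq' _ p' hp'q'
    obtain ⟨p, hpq⟩ := TED.Eseq.exists_induced_left_of_prefix hp'q' hqq'.1
    exact hq p hpq
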